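/- Let θ > 0, t > 0 and f ∈ 𝒮. Then lim_{x→∞} (P_t f)'(x) = 0 and lim_{x→∞} P_t f(x) = 0. -/

import Mathlib

open MeasureTheory Real Filter Set

/-- Complementary error function `erfc(x) = (2/√π)·∫_x^∞ e^{−y²} dy`. -/
noncomputable def erfc (x : ℝ) : ℝ :=
  (2 / Real.sqrt Real.pi) * ∫ y in Set.Ioi x, Real.exp (-y ^ 2)

/-- `g_t(x) = θ·exp(2θx + 2θ²t)·erfc(x/√(2t) + θ·√(2t))`. -/
noncomputable def gfun (θ t x : ℝ) : ℝ :=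
  θ * Real.exp (2 * θ * x + 2 * θ ^ 2 * t) *
    erfc (x / Real.sqrt (2 * t) + θ * Real.sqrt (2 * t))

/-- The Gaussian kernel `p_t(x,y) = (2πt)^{−1/2}·exp(−(y−x)²/(2t))`. -/
noncomputable def pker (t x y : ℝ) : ℝ :=
  (Real.sqrt (2 * Real.pi * t))⁻¹ * Real.exp (-(y - x) ^ 2 / (2 * t))

/-- The sticky Brownian motion semigroup:
`P_t f(x) = ∫_0^∞ (p_t(x,y) − p_t(x,−y) + 2 g_t(x+y)) f(y) dy + (1/θ) g_t(x) f(0)`. -/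
noncomputable def Pt (θ t : ℝ) (f : ℝ → ℝ) (x : ℝ) : ℝ :=
  (∫ y in Set.Ioi (0:ℝ), (pker t x y - pker t x (-y) + 2 * gfun θ t (x + y)) * f y)
    + (1 / θ) * gfun θ t x * f 0

/-- `f ∈ 𝒮`: `f` is C² on `(0,∞)`, the one-sided limits `f(0⁺)`, `f'(0⁺)`, `f''(0⁺)` exist
and are finite, and `lim_{x→∞} f(x) = 0`. -/
def memS (f : ℝ → ℝ) : Prop :=
  ContDiffOn ℝ 2 f (Set.Ioi 0) ∧
  (∃ a : ℝ, Filter.Tendsto f (nhdsWithin 0 (Set.Ioi 0)) (nhds a)) ∧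
  (∃ b : ℝ, Filter.Tendsto (deriv f) (nhdsWithin 0 (Set.Ioi 0)) (nhds b)) ∧
  (∃ c : ℝ, Filter.Tendsto (deriv (deriv f)) (nhdsWithin 0 (Set.Ioi 0)) (nhds c)) ∧
  Filter.Tendsto f Filter.atTop (nhds 0)

/-! The transition density of `P_t` and its `x`-derivative are `O(exp (-a |x - y|))` on the
quadrant `x, y > 0` for some `a > 0`: Gaussian tails beat every exponential, and the reflected
terms depend on `x + y ≥ |x - y|`. Hence one may differentiate under the integral sign, and the
integrals in `P_t f` and `(P_t f)'` are dominated by the convolution of the integrable function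
`exp (-a |·|)` with the bounded function `|f|`, which inherits the limit `0` of `f` at infinity by
dominated convergence. The boundary term decays because `g_t` does and
`g_t' = 2θ (g_t - p_t(·, 0))`.
-/

open Asymptotics Topology
open scoped Convolution ENNReal

section Convolution

variable {E : Type*} [NormedAddCommGroup E] [NormedSpace ℝ E]

lemma integrable_exp_neg_mul_abs {a : ℝ} (ha : 0 < a) :
    Integrable fun u : ℝ => exp (-a * |u|) := by
  have hpos : IntegrableOn (fun u : ℝ => exp (-a * |u|)) (Ioi 0) :=
    (integrableOn_exp_mul_Ioi (neg_lt_zero.2 ha) 0).congr_fun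
      (fun u hu => by simp only [abs_of_pos (mem_Ioi.1 hu)]) measurableSet_Ioi
  have hneg : IntegrableOn (fun u : ℝ => exp (-a * |u|)) (Iic 0) :=
    (integrableOn_exp_mul_Iic ha 0).congr_fun
      (fun u hu => by simp only [abs_of_nonpos (mem_Iic.1 hu), neg_mul_neg]) measurableSet_Iic
  rw [← integrableOn_univ, ← Iic_union_Ioi (a := (0 : ℝ))]
  exact hneg.union hpos

lemma tendsto_convolution_atTop [CompleteSpace E] {k : ℝ → ℝ} {F : ℝ → E} {c : E}
    (hk : Integrable k) (hF : MemLp F ∞) (hlim : Tendsto F atTop (𝓝 c)) :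
    Tendsto (k ⋆ F) atTop (𝓝 ((∫ u, k u) • c)) := by
  have hF_le : ∀ᵐ y, ‖F y‖ ≤ lpNorm F ∞ volume := ae_le_lpNorm_exponent_top hF
  have hqmp (x : ℝ) := quasiMeasurePreserving_sub_left_of_right_invariant volume x
  rw [← integral_smul_const]
  refine tendsto_integral_filter_of_dominated_convergence
    (fun u => ‖k u‖ * lpNorm F ∞ volume) (.of_forall fun x => ?_) (.of_forall fun x => ?_)
    (hk.norm.mul_const _) (.of_forall fun u => ?_)
  · exact hk.aestronglyMeasurable.smul
      (hF.aestronglyMeasurable.comp_quasiMeasurePreserving (hqmp x))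
  · filter_upwards [(hqmp x).ae hF_le] with u hu
    exact (norm_smul_le _ _).trans (by gcongr)
  · exact (hlim.comp (tendsto_atTop_add_const_right _ (-u) tendsto_id)).const_smul (k u)

end Convolution

/-- The kernel `K` on the half-line `(0, ∞)` decays exponentially, at rate `a`, in the distance to
the diagonal. Both `P_t` and its derivative are integral operators with such kernels. -/
def ExpLocalized (a : ℝ) (K : ℝ → ℝ → ℝ) : Prop :=
  (fun q : ℝ × ℝ => K q.1 q.2) =O[𝓟 (Ioi 0 ×ˢ Ioi 0)] fun q => exp (-a * |q.1 - q.2|)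

namespace ExpLocalized

variable {E : Type*} [NormedAddCommGroup E] [NormedSpace ℝ E]
  {a x : ℝ} {K K' : ℝ → ℝ → ℝ} {f : ℝ → E}

lemma of_add (ha : 0 ≤ a)
    (hK : (fun q : ℝ × ℝ => K q.1 q.2) =O[⊤] fun q => exp (-a * (q.1 + q.2))) :
    ExpLocalized a K := by
  refine (hK.mono le_top).trans
    (.of_norm_eventuallyLE (eventually_principal.2 fun ⟨x, y⟩ ⟨hx, hy⟩ => ?_))
  have habs : |x - y| ≤ x + y :=
    abs_sub_le_iff.2 ⟨by linarith [mem_Ioi.1 hy], by linarith [mem_Ioi.1 hx]⟩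
  simp only [norm_of_nonneg (exp_nonneg _), exp_le_exp]
  exact mul_le_mul_of_nonpos_left habs (neg_nonpos.2 ha)

lemma reflect (ha : 0 ≤ a)
    (hK : (fun q : ℝ × ℝ => K q.1 q.2) =O[⊤] fun q => exp (-a * |q.1 - q.2|)) :
    ExpLocalized a fun x y => K x (-y) := by
  refine .of_add ha <| (hK.comp_tendsto (k := fun q : ℝ × ℝ => (q.1, -q.2)) tendsto_top).trans
    (.of_norm_le fun q => ?_)
  rw [Function.comp_apply, sub_neg_eq_add, norm_of_nonneg (exp_nonneg _), exp_le_exp]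
  exact mul_le_mul_of_nonpos_left (le_abs_self _) (neg_nonpos.2 ha)

lemma exists_norm_le (hK : ExpLocalized a K) :
    ∃ C, 0 ≤ C ∧ ∀ x > 0, ∀ y > 0, ‖K x y‖ ≤ C * exp (-a * |x - y|) := by
  obtain ⟨C, hC, hle⟩ := IsBigO.exists_nonneg hK
  refine ⟨C, hC, fun x hx y hy => ?_⟩
  simpa only [norm_eq_abs, abs_exp] using isBigOWith_principal.1 hle (x, y) (mk_mem_prod hx hy)

lemma integrableOn_smul (hK : ExpLocalized a K) (ha : 0 < a) (hx : 0 < x)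
    (hKm : AEStronglyMeasurable (K x) (volume.restrict (Ioi 0)))
    (hf : MemLp f ∞ (volume.restrict (Ioi 0))) :
    IntegrableOn (fun y => K x y • f y) (Ioi 0) := by
  obtain ⟨C, -, hle⟩ := hK.exists_norm_le
  have hKi : IntegrableOn (K x) (Ioi 0) :=
    (((integrable_exp_neg_mul_abs ha).comp_sub_left x).const_mul C).integrableOn.mono' hKm
      (ae_restrict_of_forall_mem measurableSet_Ioi (hle x hx))
  exact hKi.smul_of_top_left hf

theorem tendsto_integral_atTop (hK : ExpLocalized a K) (ha : 0 < a)
    (hf : MemLp f ∞ (volume.restrict (Ioi 0))) (hlim : Tendsto f atTop (𝓝 0)) :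
    Tendsto (fun x => ∫ y in Ioi 0, K x y • f y) atTop (𝓝 0) := by
  obtain ⟨C, -, hle⟩ := hK.exists_norm_le
  set F : ℝ → ℝ := (Ioi 0).indicator fun y => ‖f y‖ with hFdef
  have hF : MemLp F ∞ := (memLp_indicator_iff_restrict measurableSet_Ioi).2 hf.norm
  have hFlim : Tendsto F atTop (𝓝 0) := by
    refine (tendsto_zero_iff_norm_tendsto_zero.1 hlim).congr' ?_
    filter_upwards [eventually_gt_atTop (0 : ℝ)] with y hy
    exact (indicator_of_mem (mem_Ioi.2 hy) fun y => ‖f y‖).symm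
  have hconv : Tendsto (fun x => C * ((fun u => exp (-a * |u|)) ⋆ F) x) atTop (𝓝 0) := by
    simpa using (tendsto_convolution_atTop (integrable_exp_neg_mul_abs ha) hF hFlim).const_mul C
  refine squeeze_zero_norm' ?_ hconv
  filter_upwards [eventually_gt_atTop 0] with x hx
  have hexp : Integrable fun y => exp (-a * |x - y|) :=
    (integrable_exp_neg_mul_abs ha).comp_sub_left x
  calc ‖∫ y in Ioi 0, K x y • f y‖ ≤ ∫ y in Ioi 0, C * (exp (-a * |x - y|) * ‖f y‖) := by
        refine norm_integral_le_of_norm_le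
          ((hexp.integrableOn.mul_of_top_left hf.norm).const_mul C) ?_
        refine ae_restrict_of_forall_mem measurableSet_Ioi fun y hy => ?_
        rw [← mul_assoc]
        exact (norm_smul_le _ _).trans (by gcongr; exact hle x hx y hy)
    _ = C * ((fun u => exp (-a * |u|)) ⋆ F) x := by
        rw [integral_const_mul, convolution_lsmul_swap, ← integral_indicator measurableSet_Ioi]
        simp only [hFdef, indicator_mul_right, smul_eq_mul]

theorem hasDerivAt_integral (hK : ExpLocalized a K) (hK' : ExpLocalized a K') (ha : 0 < a)
    (hKm : ∀ x > 0, AEStronglyMeasurable (K x) (volume.restrict (Ioi 0)))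
    (hKm' : AEStronglyMeasurable (K' x) (volume.restrict (Ioi 0)))
    (hderiv : ∀ x > 0, ∀ y > 0, HasDerivAt (fun x => K x y) (K' x y) x)
    (hf : MemLp f ∞ (volume.restrict (Ioi 0))) (hx : 0 < x) :
    HasDerivAt (fun x => ∫ y in Ioi 0, K x y • f y) (∫ y in Ioi 0, K' x y • f y) x := by
  obtain ⟨C, hC, hle⟩ := hK'.exists_norm_le
  have hexp : Integrable fun y => exp (-a * |x - y|) :=
    (integrable_exp_neg_mul_abs ha).comp_sub_left x
  have hloc {y z : ℝ} (hz : z ∈ Metric.ball x 1) :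
      exp (-a * |z - y|) ≤ exp a * exp (-a * |x - y|) := by
    rw [← exp_add, exp_le_exp]
    have hxz : |x - z| < 1 := by rwa [Metric.mem_ball', dist_eq] at hz
    nlinarith [abs_sub_le x z y]
  refine (hasDerivAt_integral_of_dominated_loc_of_deriv_le (F := fun x y => K x y • f y)
    (F' := fun x y => K' x y • f y) (bound := fun y => C * exp a * (exp (-a * |x - y|) * ‖f y‖))
    (inter_mem (Ioi_mem_nhds hx) (Metric.ball_mem_nhds x one_pos)) ?_
    (hK.integrableOn_smul ha hx (hKm x hx) hf) (hKm'.smul hf.aestronglyMeasurable) ?_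
    ((hexp.integrableOn.mul_of_top_left hf.norm).const_mul _) ?_).2
  · filter_upwards [Ioi_mem_nhds hx] with z hz
    exact (hKm z hz).smul hf.aestronglyMeasurable
  · refine ae_restrict_of_forall_mem measurableSet_Ioi fun y hy z hz => ?_
    calc ‖K' z y • f y‖ ≤ C * exp (-a * |z - y|) * ‖f y‖ :=
          (norm_smul_le _ _).trans (by gcongr; exact hle z hz.1 y hy)
      _ ≤ C * (exp a * exp (-a * |x - y|)) * ‖f y‖ := by gcongr; exact hloc hz.2
      _ = C * exp a * (exp (-a * |x - y|) * ‖f y‖) := by ring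
  · exact ae_restrict_of_forall_mem measurableSet_Ioi
      fun y hy z hz => (hderiv z hz.1 y hy).smul_const (f y)

end ExpLocalized

section GaussianKernel

variable {t : ℝ}

lemma pker_add_left_zero (t x y : ℝ) : pker t (x + y) 0 = pker t x (-y) := by
  simp only [pker]
  ring_nf

lemma hasDerivAt_pker (t x y : ℝ) :
    HasDerivAt (fun x => pker t x y) ((y - x) / t * pker t x y) x := by
  have hexponent : HasDerivAt (fun x => -(y - x) ^ 2 / (2 * t)) ((y - x) / t) x :=
    ((((hasDerivAt_id x).const_sub y).pow 2).neg.div_const (2 * t)).congr_deriv (by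
      simp only [Nat.cast_ofNat, id_eq, Nat.add_one_sub_one, pow_one]
      ring)
  exact (hexponent.exp.const_mul _).congr_deriv (by rw [pker]; ring)

lemma continuous_pker (t x : ℝ) : Continuous (pker t x) := by
  unfold pker
  fun_prop

lemma exp_neg_sq_div_le (ht : 0 < t) (a u : ℝ) :
    exp (-u ^ 2 / (2 * t)) ≤ exp (a ^ 2 * t / 2) * exp (-a * |u|) := by
  rw [← exp_add, exp_le_exp, div_le_iff₀ (by positivity), ← sq_abs]
  nlinarith [sq_nonneg (|u| - a * t)]

lemma pker_isBigO_exp (ht : 0 < t) (a : ℝ) :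
    (fun q : ℝ × ℝ => pker t q.1 q.2) =O[⊤] fun q => exp (-a * |q.1 - q.2|) := by
  refine isBigO_top.2 ⟨(√(2 * π * t))⁻¹ * exp (a ^ 2 * t / 2), fun ⟨x, y⟩ => ?_⟩
  have hnonneg : 0 ≤ pker t x y := by unfold pker; positivity
  rw [norm_of_nonneg hnonneg, norm_of_nonneg (exp_nonneg _), pker, mul_assoc _ (exp _),
    abs_sub_comm]
  exact mul_le_mul_of_nonneg_left (exp_neg_sq_div_le ht a (y - x)) (by positivity)

lemma sub_div_mul_pker_isBigO_exp (ht : 0 < t) (a : ℝ) :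
    (fun q : ℝ × ℝ => (q.2 - q.1) / t * pker t q.1 q.2) =O[⊤]
      fun q => exp (-a * |q.1 - q.2|) := by
  have hlin : (fun q : ℝ × ℝ => (q.2 - q.1) / t) =O[⊤] fun q => exp |q.1 - q.2| := by
    refine isBigO_top.2 ⟨t⁻¹, fun q => ?_⟩
    rw [norm_of_nonneg (exp_nonneg _), norm_div, norm_of_nonneg ht.le, norm_eq_abs, abs_sub_comm,
      div_eq_inv_mul]
    gcongr
    linarith [add_one_le_exp |q.1 - q.2|]
  refine (hlin.mul (pker_isBigO_exp ht (a + 1))).congr_right fun q => ?_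
  rw [← exp_add]
  ring_nf

end GaussianKernel

section Erfc

lemma integrable_exp_neg_sq : Integrable fun y : ℝ => exp (-y ^ 2) := by
  simpa using integrable_exp_neg_mul_sq one_pos

lemma hasDerivAt_erfc (x : ℝ) : HasDerivAt erfc (-(2 / √π) * exp (-x ^ 2)) x := by
  have herfc : erfc = fun x =>
      2 / √π * ((∫ y in Ioi 0, exp (-y ^ 2)) - ∫ y in (0 : ℝ)..x, exp (-y ^ 2)) := by
    funext x
    rw [erfc, ← intervalIntegral.integral_interval_add_Ioi (a := 0) (b := x)
      integrable_exp_neg_sq.integrableOn integrable_exp_neg_sq.integrableOn, add_sub_cancel_left]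
  have hcont : Continuous fun y : ℝ => exp (-y ^ 2) := by fun_prop
  rw [herfc]
  exact (((hcont.integral_hasStrictDerivAt 0 x).hasDerivAt.const_sub _).const_mul _).congr_deriv
    (by ring)

lemma erfc_nonneg (x : ℝ) : 0 ≤ erfc x :=
  mul_nonneg (by positivity) (integral_nonneg fun _ => (exp_pos _).le)

lemma erfc_le_exp {b : ℝ} (hb : 0 < b) (x : ℝ) :
    erfc x ≤ 2 / √π * (exp (b ^ 2 / 4) / b) * exp (-b * x) := by
  have hsq (y : ℝ) : exp (-y ^ 2) ≤ exp (b ^ 2 / 4) * exp (-b * y) := by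
    rw [← exp_add, exp_le_exp]
    nlinarith [sq_nonneg (y - b / 2)]
  calc erfc x ≤ 2 / √π * ∫ y in Ioi x, exp (b ^ 2 / 4) * exp (-b * y) := by
        refine mul_le_mul_of_nonneg_left ?_ (by positivity)
        exact integral_mono integrable_exp_neg_sq.integrableOn
          ((integrableOn_exp_mul_Ioi (neg_lt_zero.2 hb) x).const_mul _) hsq
    _ = 2 / √π * (exp (b ^ 2 / 4) / b) * exp (-b * x) := by
        rw [integral_const_mul, integral_exp_mul_Ioi (neg_lt_zero.2 hb)]
        field_simp

lemma erfc_isBigO_exp {b : ℝ} (hb : 0 < b) : erfc =O[⊤] fun x => exp (-b * x) := by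
  refine isBigO_top.2 ⟨2 / √π * (exp (b ^ 2 / 4) / b), fun x => ?_⟩
  rw [norm_of_nonneg (erfc_nonneg x), norm_of_nonneg (exp_nonneg _)]
  exact erfc_le_exp hb x

end Erfc

section StickyKernel

variable {θ t a x : ℝ} {f : ℝ → ℝ}

lemma exp_mul_exp_neg_sq_eq (ht : 0 < t) (θ u : ℝ) :
    exp (2 * θ * u + 2 * θ ^ 2 * t) * exp (-(u / √(2 * t) + θ * √(2 * t)) ^ 2) =
      exp (-u ^ 2 / (2 * t)) := by
  have hs : √(2 * t) ^ 2 = 2 * t := sq_sqrt (by positivity)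
  have hsq : (u / √(2 * t) + θ * √(2 * t)) ^ 2 = u ^ 2 / (2 * t) + 2 * θ * u + 2 * θ ^ 2 * t := by
    rw [add_sq, div_pow, mul_pow, hs]
    field_simp
  rw [← exp_add, hsq]
  ring_nf

lemma hasDerivAt_gfun (ht : 0 < t) (θ u : ℝ) :
    HasDerivAt (gfun θ t) (2 * θ * (gfun θ t u - pker t u 0)) u := by
  have harg : HasDerivAt (fun u => u / √(2 * t) + θ * √(2 * t)) (1 / √(2 * t)) u :=
    ((hasDerivAt_id u).div_const _).add_const _
  have hexp : HasDerivAt (fun u => exp (2 * θ * u + 2 * θ ^ 2 * t))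
      (exp (2 * θ * u + 2 * θ ^ 2 * t) * (2 * θ)) u := by
    simpa using (((hasDerivAt_id u).const_mul (2 * θ)).add_const (2 * θ ^ 2 * t)).exp
  have hsqrt : √(2 * π * t) = √π * √(2 * t) := by
    rw [← sqrt_mul pi_pos.le]
    ring_nf
  have hpker : pker t u 0 = (√π * √(2 * t))⁻¹ * (exp (2 * θ * u + 2 * θ ^ 2 * t) *
      exp (-(u / √(2 * t) + θ * √(2 * t)) ^ 2)) := by
    rw [exp_mul_exp_neg_sq_eq ht, pker, hsqrt, zero_sub, neg_sq]
  refine ((hexp.const_mul θ).mul ((hasDerivAt_erfc _).comp u harg)).congr_deriv ?_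
  rw [hpker, gfun, Function.comp_apply]
  field_simp
  ring

lemma continuous_gfun (ht : 0 < t) (θ : ℝ) : Continuous (gfun θ t) :=
  continuous_iff_continuousAt.2 fun u => (hasDerivAt_gfun ht θ u).continuousAt

lemma gfun_isBigO_exp (ht : 0 < t) (ha : -(2 * θ) < a) :
    gfun θ t =O[⊤] fun u => exp (-a * u) := by
  set s := √(2 * t)
  have hs0 : 0 < s := sqrt_pos.2 (by positivity)
  have hb : 0 < (a + 2 * θ) * s := mul_pos (by linarith) hs0
  have herfc : (fun u => erfc (u / s + θ * s)) =O[⊤]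
      fun u => exp (-((a + 2 * θ) * s) * (u / s + θ * s)) :=
    (erfc_isBigO_exp hb).comp_tendsto tendsto_top
  have hprod := ((isBigO_refl (fun u => exp (2 * θ * u + 2 * θ ^ 2 * t)) ⊤).const_mul_left θ).mul
    herfc
  refine hprod.trans (.of_bound (exp (2 * θ ^ 2 * t - (a + 2 * θ) * θ * s ^ 2))
    (.of_forall fun u => le_of_eq ?_))
  rw [← exp_add, norm_of_nonneg (exp_nonneg _), norm_of_nonneg (exp_nonneg _), ← exp_add]
  congr 1
  field_simp
  ring

/-- The transition density of the sticky Brownian motion on `(0, ∞)`, that is, the integral kernel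
in the definition of `Pt`. -/
noncomputable def stickyKernel (θ t x y : ℝ) : ℝ :=
  pker t x y - pker t x (-y) + 2 * gfun θ t (x + y)

/-- The derivative of `stickyKernel θ t x y` in the starting point `x`. -/
noncomputable def stickyKernelDeriv (θ t x y : ℝ) : ℝ :=
  (y - x) / t * pker t x y - (-y - x) / t * pker t x (-y) +
    2 * (2 * θ * (gfun θ t (x + y) - pker t x (-y)))

lemma hasDerivAt_stickyKernel (ht : 0 < t) (θ x y : ℝ) :
    HasDerivAt (fun x => stickyKernel θ t x y) (stickyKernelDeriv θ t x y) x := by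
  have hg : HasDerivAt (fun x => gfun θ t (x + y))
      (2 * θ * (gfun θ t (x + y) - pker t x (-y))) x := by
    rw [← pker_add_left_zero]
    exact (hasDerivAt_gfun ht θ (x + y)).comp_add_const x y
  exact ((hasDerivAt_pker t x y).sub (hasDerivAt_pker t x (-y))).add (hg.const_mul 2)

lemma continuous_stickyKernel (ht : 0 < t) (θ x : ℝ) : Continuous (stickyKernel θ t x) := by
  have hp := continuous_pker t x
  have hg := continuous_gfun ht θ
  unfold stickyKernel
  fun_prop

lemma continuous_stickyKernelDeriv (ht : 0 < t) (θ x : ℝ) :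
    Continuous (stickyKernelDeriv θ t x) := by
  have hp := continuous_pker t x
  have hg := continuous_gfun ht θ
  unfold stickyKernelDeriv
  fun_prop

lemma expLocalized_gfun_add (ht : 0 < t) (ha₀ : 0 ≤ a) (ha : -(2 * θ) < a) :
    ExpLocalized a fun x y => gfun θ t (x + y) :=
  .of_add ha₀ ((gfun_isBigO_exp ht ha).comp_tendsto (k := fun q : ℝ × ℝ => q.1 + q.2) tendsto_top)

lemma expLocalized_stickyKernel (ht : 0 < t) (ha₀ : 0 ≤ a) (ha : -(2 * θ) < a) :
    ExpLocalized a (stickyKernel θ t) := by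
  have hp := pker_isBigO_exp ht a
  exact ((hp.mono le_top).sub (ExpLocalized.reflect ha₀ hp)).add
    ((expLocalized_gfun_add ht ha₀ ha).const_mul_left 2)

lemma expLocalized_stickyKernelDeriv (ht : 0 < t) (ha₀ : 0 ≤ a) (ha : -(2 * θ) < a) :
    ExpLocalized a (stickyKernelDeriv θ t) := by
  have hp : ExpLocalized a fun x y => pker t x (-y) := .reflect ha₀ (pker_isBigO_exp ht a)
  have hp' := sub_div_mul_pker_isBigO_exp ht a
  have hp'_reflect : ExpLocalized a fun x y => (-y - x) / t * pker t x (-y) :=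
    .reflect (K := fun x y => (y - x) / t * pker t x y) ha₀ hp'
  have hg' : ExpLocalized a fun x y => 2 * θ * (gfun θ t (x + y) - pker t x (-y)) :=
    ((expLocalized_gfun_add ht ha₀ ha).sub hp).const_mul_left (2 * θ)
  exact ((hp'.mono le_top).sub hp'_reflect).add (hg'.const_mul_left 2)

lemma tendsto_exp_neg_mul_atTop (ha : 0 < a) : Tendsto (fun u : ℝ => exp (-a * u)) atTop (𝓝 0) :=
  tendsto_exp_atBot.comp (tendsto_id.const_mul_atTop_of_neg (neg_lt_zero.2 ha))

lemma tendsto_gfun_atTop (ht : 0 < t) (θ : ℝ) : Tendsto (gfun θ t) atTop (𝓝 0) := by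
  obtain ⟨a, ha⟩ := exists_gt (max 0 (-(2 * θ)))
  obtain ⟨ha₀, ha⟩ := max_lt_iff.1 ha
  exact ((gfun_isBigO_exp ht ha).mono le_top).trans_tendsto (tendsto_exp_neg_mul_atTop ha₀)

lemma tendsto_pker_left_atTop (ht : 0 < t) (y : ℝ) :
    Tendsto (fun x => pker t x y) atTop (𝓝 0) := by
  have hdist : Tendsto (fun x => |x - y|) atTop atTop :=
    tendsto_abs_atTop_atTop.comp (tendsto_atTop_add_const_right _ (-y) tendsto_id)
  exact ((pker_isBigO_exp ht 1).comp_tendsto (k := fun x => (x, y)) tendsto_top).trans_tendsto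
    ((tendsto_exp_neg_mul_atTop one_pos).comp hdist)

lemma hasDerivAt_Pt (ht : 0 < t) (θ : ℝ) (hf : MemLp f ∞ (volume.restrict (Ioi 0)))
    (hx : 0 < x) :
    HasDerivAt (Pt θ t f) ((∫ y in Ioi 0, stickyKernelDeriv θ t x y * f y) +
      1 / θ * (2 * θ * (gfun θ t x - pker t x 0)) * f 0) x := by
  obtain ⟨a, ha⟩ := exists_gt (max 0 (-(2 * θ)))
  obtain ⟨ha₀, ha⟩ := max_lt_iff.1 ha
  have hintegral := (expLocalized_stickyKernel ht ha₀.le ha).hasDerivAt_integral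
    (expLocalized_stickyKernelDeriv ht ha₀.le ha) ha₀
    (fun x _ => (continuous_stickyKernel ht θ x).aestronglyMeasurable)
    (continuous_stickyKernelDeriv ht θ x).aestronglyMeasurable
    (fun x _ y _ => hasDerivAt_stickyKernel ht θ x y) hf hx
  exact hintegral.add (((hasDerivAt_gfun ht θ x).const_mul (1 / θ)).mul_const (f 0))

end StickyKernel

lemma isBounded_image_Ioi_of_tendsto {α : Type*} [PseudoMetricSpace α] {f : ℝ → α} {c : ℝ}
    {l m : α} (hf : ContinuousOn f (Ioi c)) (hc : Tendsto f (𝓝[>] c) (𝓝 l))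
    (htop : Tendsto f atTop (𝓝 m)) : Bornology.IsBounded (f '' Ioi c) := by
  obtain ⟨s, hs, hs_bdd⟩ := Metric.exists_isBounded_image_of_tendsto hc
  obtain ⟨u, hu, hu_bdd⟩ := Metric.exists_isBounded_image_of_tendsto htop
  obtain ⟨d, hcd, hds⟩ := mem_nhdsGT_iff_exists_Ioo_subset.1 hs
  obtain ⟨N, hNu⟩ := mem_atTop_sets.1 hu
  have hmid : Bornology.IsBounded (f '' Icc d N) :=
    (isCompact_Icc.image_of_continuousOn
      (hf.mono fun y hy => lt_of_lt_of_le hcd hy.1)).isBounded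
  refine (hs_bdd.union (hmid.union hu_bdd)).subset ?_
  rw [← image_union, ← image_union]
  refine image_mono fun y hy => ?_
  rcases lt_or_ge y d with hyd | hyd
  · exact .inl (hds ⟨hy, hyd⟩)
  rcases le_total y N with hyN | hyN
  · exact .inr (.inl ⟨hyd, hyN⟩)
  · exact .inr (.inr (hNu y hyN))

lemma memS.memLp_top {f : ℝ → ℝ} (hf : memS f) : MemLp f ∞ (volume.restrict (Ioi 0)) := by
  obtain ⟨hf_diff, ⟨_, hf_zero⟩, -, -, hf_top⟩ := hf
  obtain ⟨M, hM⟩ := (isBounded_image_Ioi_of_tendsto hf_diff.continuousOn hf_zero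
    hf_top).exists_norm_le
  exact memLp_top_of_bound (hf_diff.continuousOn.aestronglyMeasurable measurableSet_Ioi) M
    (ae_restrict_of_forall_mem measurableSet_Ioi fun y hy => hM _ ⟨y, hy, rfl⟩)

theorem Pt_tendsto_atTop_general (θ t : ℝ) (ht : 0 < t) (f : ℝ → ℝ)
    (hf : MemLp f ∞ (volume.restrict (Ioi 0))) (hlim : Tendsto f atTop (𝓝 0)) :
    Tendsto (deriv (Pt θ t f)) atTop (𝓝 0) ∧ Tendsto (Pt θ t f) atTop (𝓝 0) := by
  obtain ⟨a, ha⟩ := exists_gt (max 0 (-(2 * θ)))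
  obtain ⟨ha₀, ha⟩ := max_lt_iff.1 ha
  have hg := tendsto_gfun_atTop ht θ
  have hp := tendsto_pker_left_atTop ht 0
  constructor
  · have hderiv : (fun x => (∫ y in Ioi 0, stickyKernelDeriv θ t x y * f y) +
        1 / θ * (2 * θ * (gfun θ t x - pker t x 0)) * f 0) =ᶠ[atTop] deriv (Pt θ t f) := by
      filter_upwards [eventually_gt_atTop 0] with x hx
      exact (hasDerivAt_Pt ht θ hf hx).deriv.symm
    have hintegral :=
      (expLocalized_stickyKernelDeriv ht ha₀.le ha).tendsto_integral_atTop ha₀ hf hlim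
    have hboundary := (((hg.sub hp).const_mul (2 * θ)).const_mul (1 / θ)).mul_const (f 0)
    exact Tendsto.congr' hderiv (by simpa using hintegral.add hboundary)
  · have hintegral := (expLocalized_stickyKernel ht ha₀.le ha).tendsto_integral_atTop ha₀ hf hlim
    have hboundary := (hg.const_mul (1 / θ)).mul_const (f 0)
    simpa only [mul_zero, zero_mul, add_zero] using! hintegral.add hboundary

/-- For `f ∈ 𝒮`, `lim_{x→∞} (P_t f)'(x) = 0` and `lim_{x→∞} P_t f(x) = 0`. -/
theorem Pt_tendsto_atTop (θ t : ℝ) (hθ : 0 < θ) (ht : 0 < t)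
    (f : ℝ → ℝ) (hf : memS f) :
    Filter.Tendsto (deriv (Pt θ t f)) Filter.atTop (nhds 0) ∧
    Filter.Tendsto (Pt θ t f) Filter.atTop (nhds 0) :=
  Pt_tendsto_atTop_general θ t ht f hf.memLp_top hf.2.2.2.2
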